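/- With coarse-grained variables defined by piecewise linear (hat-function) weighting over blocks of size $M$, the diagonal entry of the memory kernel at time zero satisfies $0 \leq \Theta_{0,0}(0) \leq \frac{2M\kappa_1 + 8M\kappa_2 - 6\kappa_2}{M(2M^2+1)/3}$; in particular $\Theta_{0,0}(0) = \mathcal{O}(M^{-2})$ as $M \to \infty$. -/

import Mathlib

open Matrix Complex Real

noncomputable def A0 (M : ℕ) (κ1 κ2 : ℝ) : Matrix (Fin M) (Fin M) ℂ := fun i j =>
  if (i : ℤ) = (j : ℤ) then 2 * ((κ1 : ℂ) + κ2)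
  else if |(i : ℤ) - (j : ℤ)| = 1 then -(κ1 : ℂ)
  else if |(i : ℤ) - (j : ℤ)| = 2 then -(κ2 : ℂ) else 0

noncomputable def A1 (M : ℕ) (κ1 κ2 : ℝ) : Matrix (Fin M) (Fin M) ℂ := fun i j =>
  if (i : ℕ) = 0 ∧ (j : ℕ) = M - 1 then -(κ1 : ℂ)
  else if ((i : ℕ) = 0 ∧ (j : ℕ) = M - 2) ∨ ((i : ℕ) = 1 ∧ (j : ℕ) = M - 1) then -(κ2 : ℂ)
  else 0

noncomputable def Ahat (M : ℕ) (κ1 κ2 ξ : ℝ) : Matrix (Fin M) (Fin M) ℂ :=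
  A0 M κ1 κ2 + Complex.exp (-(ξ : ℂ) * Complex.I) • A1 M κ1 κ2
    + Complex.exp ((ξ : ℂ) * Complex.I) • (A1 M κ1 κ2)ᵀ

noncomputable def q1 (M : ℕ) : Fin M → ℂ := fun _ => (1 / Real.sqrt M : ℝ)

noncomputable def cnorm (M : ℕ) : ℝ := Real.sqrt ((2 * M ^ 3 + M) / 3)

noncomputable def Phihat (M : ℕ) (ξ : ℝ) : Fin M → ℂ := fun k =>
  ((((k : ℕ) : ℝ) + 1) / cnorm M : ℝ) +
    Complex.exp (-(ξ : ℂ) * Complex.I) * (((M : ℝ) - 1 - ((k : ℕ) : ℝ)) / cnorm M : ℝ)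

/-! Let `S` be the shift of the lattice, which on Bloch waves of frequency `ξ` acts as a unitary
`M × M` matrix, and let `D = 1 - S`. The symbol of the interaction is
`A = κ1 D*D + κ2 (1 - S²)*(1 - S²) = (κ1 + 4κ2) D*D - κ2 (D²)*D²`;
the first form shows `A ≥ 0` when `κ2 ≥ 0`, the second when `κ2 ≤ 0`. For `A ≥ 0`, Cauchy–Schwarz
gives `(v*v)² ≤ (v*Av)(v*A⁻¹v)`, so the integrand of the kernel lies between `0` and `v*Av`.
The first differences of the hat function all have modulus `√t / c`, where `t = 2 - 2 cos ξ`, and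
its second difference is `-t / c`, supported at a single site. Hence
`v*Av = (M (κ1 + 4κ2) t - κ2 t²) / c²`, and the bound follows since `t` and `t²` have means `2`
and `6`. -/

open scoped ComplexOrder

section StarRing

variable {R : Type*} [Ring R] [StarRing R] {u : R}

lemma star_one_sub_mul_one_sub (hu : star u * u = 1) :
    star (1 - u) * (1 - u) = 2 - u - star u := by
  simp only [star_sub, star_one, sub_mul, mul_sub, one_mul, mul_one, hu, ← one_add_one_eq_two]
  abel

lemma star_mul_self_mul_mul_self (hu : star u * u = 1) : star (u * u) * (u * u) = 1 := by
  rw [star_mul, mul_assoc, ← mul_assoc (star u) u u, hu, one_mul, hu]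

lemma star_one_add_mul_one_add (hu : star u * u = 1) :
    star (1 + u) * (1 + u) = 4 - star (1 - u) * (1 - u) := by
  rw [star_one_sub_mul_one_sub hu, show (4 : R) = 2 + (1 + 1) by norm_num]
  simp only [star_add, star_one, add_mul, mul_add, one_mul, mul_one, hu]
  abel

/- The factorisation `1 - u² = (1 + u)(1 - u)` reduces this to the parallelogram identity. -/
lemma star_one_sub_sq_mul_one_sub_sq (hu : star u * u = 1) :
    star (1 - u * u) * (1 - u * u) =
      4 • (star (1 - u) * (1 - u)) - star ((1 - u) * (1 - u)) * ((1 - u) * (1 - u)) := by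
  have factor : 1 - u * u = (1 + u) * (1 - u) := by noncomm_ring
  calc star (1 - u * u) * (1 - u * u)
      = star (1 - u) * (star (1 + u) * (1 + u)) * (1 - u) := by
        rw [factor, star_mul]; simp only [mul_assoc]
    _ = _ := by
        rw [star_one_add_mul_one_add hu, star_mul]; noncomm_ring

end StarRing

section PosSemidef

variable {n 𝕜 : Type*} [Fintype n] [RCLike 𝕜] {A : Matrix n n 𝕜}

lemma star_dotProduct_star_mul_self_mulVec (B : Matrix n n 𝕜) (v : n → 𝕜) :
    star v ⬝ᵥ (star B * B) *ᵥ v = star (B *ᵥ v) ⬝ᵥ (B *ᵥ v) := by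
  rw [← mulVec_mulVec, dotProduct_mulVec, star_mulVec, star_eq_conjTranspose]

lemma star_dotProduct_mulVec_mul_le (hA : A.PosSemidef) (x y : n → 𝕜) :
    (star x ⬝ᵥ A *ᵥ y) * (star y ⬝ᵥ A *ᵥ x) ≤ (star x ⬝ᵥ A *ᵥ x) * (star y ⬝ᵥ A *ᵥ y) := by
  let _ := A.toSeminormedAddCommGroup hA
  let _ := A.toInnerProductSpace hA
  have inner_eq (u v : n → 𝕜) : star u ⬝ᵥ A *ᵥ v = inner 𝕜 u v := dotProduct_comm _ _
  rw [inner_eq, inner_eq, inner_eq, inner_eq, ← inner_conj_symm y x, RCLike.mul_conj,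
    inner_self_eq_norm_sq_to_K, inner_self_eq_norm_sq_to_K, ← mul_pow]
  have := pow_le_pow_left₀ (norm_nonneg _) (norm_inner_le_norm (𝕜 := 𝕜) x y) 2
  exact_mod_cast this

variable [DecidableEq n]

lemma inv_dotProduct_inv_mulVec_mul_sq_le (hA : A.PosSemidef) (v : n → 𝕜) :
    (star v ⬝ᵥ A⁻¹ *ᵥ v)⁻¹ * (star v ⬝ᵥ v) ^ 2 ≤ star v ⬝ᵥ A *ᵥ v := by
  by_cases hdet : IsUnit A.det
  · refine inv_mul_le_of_le_mul₀ (hA.inv.dotProduct_mulVec_nonneg v)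
      (hA.dotProduct_mulVec_nonneg v) ?_
    have hAA : A *ᵥ A⁻¹ *ᵥ v = v := by rw [mulVec_mulVec, mul_nonsing_inv A hdet, one_mulVec]
    have hstar : star (A⁻¹ *ᵥ v) = star v ᵥ* A⁻¹ := by
      rw [star_mulVec, hA.inv.isHermitian.eq]
    have := star_dotProduct_mulVec_mul_le hA (A⁻¹ *ᵥ v) v
    simpa [hAA, hstar, dotProduct_mulVec, nonsing_inv_mul A hdet, ← sq] using this
  · simpa [nonsing_inv_apply_not_isUnit A hdet] using hA.dotProduct_mulVec_nonneg v

/-- The integrand of `Θ_{0,0}(0)` at a fixed frequency, for the symbol `A` of the interaction and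
the symbol `v` of the weights. The reciprocal is `0` where `star v ⬝ᵥ A⁻¹ *ᵥ v` vanishes, in
particular for singular `A`. -/
noncomputable def kernelDensity (A : Matrix n n 𝕜) (v : n → 𝕜) : 𝕜 :=
  star v ⬝ᵥ A *ᵥ v - (star v ⬝ᵥ A⁻¹ *ᵥ v)⁻¹ * (star v ⬝ᵥ v) ^ 2

lemma kernelDensity_nonneg (hA : A.PosSemidef) (v : n → 𝕜) : 0 ≤ kernelDensity A v :=
  sub_nonneg.2 (inv_dotProduct_inv_mulVec_mul_sq_le hA v)

lemma kernelDensity_le (hA : A.PosSemidef) (v : n → 𝕜) :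
    kernelDensity A v ≤ star v ⬝ᵥ A *ᵥ v :=
  sub_le_self _ (mul_nonneg (inv_nonneg.2 (hA.inv.dotProduct_mulVec_nonneg v))
    (pow_nonneg (dotProduct_star_self_nonneg v) 2))

end PosSemidef

section Isometry

variable {n 𝕜 : Type*} [Fintype n] [DecidableEq n] [RCLike 𝕜] {U : Matrix n n 𝕜} {a b : ℝ}

lemma smul_gram_add_smul_gram (hU : star U * U = 1) :
    a • (star (1 - U) * (1 - U)) + b • (star (1 - U * U) * (1 - U * U)) =
      (a + 4 * b) • (star (1 - U) * (1 - U)) -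
        b • (star ((1 - U) * (1 - U)) * ((1 - U) * (1 - U))) := by
  rw [star_one_sub_sq_mul_one_sub_sq hU]
  module

lemma posSemidef_smul_gram_add_smul_gram (hU : star U * U = 1) (ha : 0 ≤ a)
    (hab : 0 ≤ a + 4 * b) :
    (a • (star (1 - U) * (1 - U)) + b • (star (1 - U * U) * (1 - U * U))).PosSemidef := by
  have gram_smul {B : Matrix n n 𝕜} {c : ℝ} (hc : 0 ≤ c) : (c • (star B * B)).PosSemidef :=
    (posSemidef_conjTranspose_mul_self B).smul hc
  rcases le_total 0 b with hb | hb
  · exact (gram_smul ha).add (gram_smul hb)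
  · rw [smul_gram_add_smul_gram hU, sub_eq_add_neg, ← neg_smul]
    exact (gram_smul hab).add (gram_smul (neg_nonneg.2 hb))

end Isometry

section TwistedShift

variable {R : Type*} [CommRing R] {M : ℕ}

/-- The shift `(x_i) ↦ (x_{i+1})` on sequences with the Bloch condition `x_{i+M} = z x_i`,
written as a matrix on the entries `x_0, …, x_{M-1}` of one period. -/
def twistedShift (M : ℕ) (z : R) : Matrix (Fin M) (Fin M) R :=
  diagonal (fun i : Fin M => if (i : ℕ) + 1 = M then z else 1) * (finRotate M).permMatrix R

lemma val_finRotate (i : Fin M) :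
    (finRotate M i : ℕ) = if (i : ℕ) + 1 = M then 0 else (i : ℕ) + 1 := by
  cases M with
  | zero => exact i.elim0
  | succ m => rw [coe_finRotate]; simp [Fin.ext_iff]

lemma twistedShift_mulVec (z : R) (v : Fin M → R) (i : Fin M) :
    (twistedShift M z *ᵥ v) i = (if (i : ℕ) + 1 = M then z else 1) * v (finRotate M i) := by
  rw [twistedShift, ← mulVec_mulVec, mulVec_diagonal, permMatrix_mulVec, Function.comp_apply]

lemma twistedShift_apply (z : R) (i j : Fin M) :
    twistedShift M z i j =
      (if (j : ℕ) = i + 1 then 1 else 0) + z * (if (j : ℕ) + M = i + 1 then 1 else 0) := by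
  rw [twistedShift, diagonal_mul, Equiv.Perm.permMatrix, PEquiv.toMatrix_apply]
  simp only [Equiv.toPEquiv_apply, Option.mem_some_iff, Fin.ext_iff, val_finRotate]
  have := j.isLt
  split_ifs <;> first | omega | simp

lemma twistedShift_mul_self_apply (hM : 2 ≤ M) (z : R) (i j : Fin M) :
    (twistedShift M z * twistedShift M z) i j =
      (if (j : ℕ) = i + 2 then 1 else 0) + z * (if (j : ℕ) + M = i + 2 then 1 else 0) := by
  change (twistedShift M z *ᵥ fun k => twistedShift M z k j) i = _
  rw [twistedShift_mulVec, twistedShift_apply, val_finRotate]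
  have := j.isLt
  split_ifs <;> first | omega | simp

lemma star_twistedShift_mul_self [StarRing R] {z : R} (hz : star z * z = 1) :
    star (twistedShift M z) * twistedShift M z = 1 := by
  have hphase (i : Fin M) :
      star (if (i : ℕ) + 1 = M then z else 1) * (if (i : ℕ) + 1 = M then z else 1) = 1 := by
    split_ifs <;> simp [hz]
  rw [twistedShift, star_mul, mul_assoc, ← mul_assoc (star (diagonal _)), star_eq_conjTranspose,
    star_eq_conjTranspose, diagonal_conjTranspose, diagonal_mul_diagonal]
  simp only [Pi.star_apply, hphase]
  rw [diagonal_one, one_mul, conjTranspose_permMatrix, ← permMatrix_mul, mul_inv_cancel,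
    permMatrix_one]

end TwistedShift

section Model

variable {M : ℕ}

lemma A0_apply (κ1 κ2 : ℝ) (i j : Fin M) :
    A0 M κ1 κ2 i j = 2 * (κ1 + κ2) * (1 : Matrix (Fin M) (Fin M) ℂ) i j -
      κ1 * ((if (j : ℕ) = i + 1 then 1 else 0) + (if (i : ℕ) = j + 1 then 1 else 0)) -
      κ2 * ((if (j : ℕ) = i + 2 then 1 else 0) + (if (i : ℕ) = j + 2 then 1 else 0)) := by
  simp only [A0, one_apply, Fin.ext_iff, abs_eq (zero_le_one' ℤ), abs_eq (zero_le_two (α := ℤ))]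
  split_ifs <;> first | omega | simp

lemma A1_apply (hM : 2 ≤ M) (κ1 κ2 : ℝ) (i j : Fin M) :
    A1 M κ1 κ2 i j = -κ1 * (if (i : ℕ) + M = j + 1 then 1 else 0) -
      κ2 * (if (i : ℕ) + M = j + 2 then 1 else 0) := by
  simp only [A1]
  have := i.isLt
  have := j.isLt
  split_ifs <;> first | omega | simp

lemma star_exp_mul_I (ξ : ℝ) : star (Complex.exp (ξ * I)) = Complex.exp (-ξ * I) := by
  simp [← Complex.exp_conj]

lemma star_exp_mul_I_mul_self (ξ : ℝ) : star (Complex.exp (ξ * I)) * Complex.exp (ξ * I) = 1 := by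
  rw [star_exp_mul_I, ← Complex.exp_add]; simp

/-- The twisted shift at Bloch phase `z = e^{iξ}`; it is the Fourier symbol of the unit shift of the
lattice, decomposed into blocks of size `M`. -/
noncomputable def blochShift (M : ℕ) (ξ : ℝ) : Matrix (Fin M) (Fin M) ℂ :=
  twistedShift M (Complex.exp (ξ * I))

lemma star_blochShift_mul_self (M : ℕ) (ξ : ℝ) : star (blochShift M ξ) * blochShift M ξ = 1 :=
  star_twistedShift_mul_self (star_exp_mul_I_mul_self ξ)

lemma Ahat_eq_blochShift (hM : 2 ≤ M) (κ1 κ2 ξ : ℝ) :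
    Ahat M κ1 κ2 ξ = κ1 • (2 - blochShift M ξ - star (blochShift M ξ)) +
      κ2 • (2 - blochShift M ξ * blochShift M ξ - star (blochShift M ξ * blochShift M ξ)) := by
  ext i j
  simp only [Ahat, blochShift, ← star_exp_mul_I,
    ← one_add_one_eq_two (R := Matrix (Fin M) (Fin M) ℂ),
    Matrix.add_apply, Matrix.smul_apply, Matrix.sub_apply, transpose_apply, star_apply,
    A0_apply, A1_apply hM, twistedShift_apply, twistedShift_mul_self_apply hM,
    star_add, star_mul', apply_ite star, star_one, star_zero, smul_eq_mul, Complex.real_smul]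
  ring

lemma Ahat_eq_gram (hM : 2 ≤ M) (κ1 κ2 ξ : ℝ) :
    Ahat M κ1 κ2 ξ = κ1 • (star (1 - blochShift M ξ) * (1 - blochShift M ξ)) +
      κ2 • (star (1 - blochShift M ξ * blochShift M ξ) *
        (1 - blochShift M ξ * blochShift M ξ)) := by
  have hS := star_blochShift_mul_self M ξ
  rw [Ahat_eq_blochShift hM, star_one_sub_mul_one_sub hS,
    star_one_sub_mul_one_sub (star_mul_self_mul_mul_self hS)]

lemma posSemidef_Ahat (hM : 2 ≤ M) {κ1 κ2 : ℝ} (h1 : 0 ≤ κ1) (h2 : 0 ≤ κ1 + 4 * κ2) (ξ : ℝ) :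
    (Ahat M κ1 κ2 ξ).PosSemidef := by
  rw [Ahat_eq_gram hM]
  exact posSemidef_smul_gram_add_smul_gram (star_blochShift_mul_self M ξ) h1 h2

lemma one_sub_blochShift_mulVec_Phihat (ξ : ℝ) :
    (1 - blochShift M ξ) *ᵥ Phihat M ξ = fun i : Fin M =>
      (if (i : ℕ) + 1 = M then 1 - Complex.exp (ξ * I) else star (Complex.exp (ξ * I)) - 1) /
        cnorm M := by
  ext i
  have hz := star_exp_mul_I_mul_self ξ
  simp only [sub_mulVec, one_mulVec, Pi.sub_apply, blochShift, twistedShift_mulVec, Phihat,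
    val_finRotate, ← star_exp_mul_I]
  generalize Complex.exp (ξ * I) = z at hz ⊢
  split_ifs with hi
  · have hi' : (M : ℂ) = (i : ℕ) + 1 := by exact_mod_cast hi.symm
    push_cast
    rw [hi']
    linear_combination -((i : ℕ) : ℂ) / cnorm M * hz
  · push_cast
    ring

lemma one_sub_blochShift_sq_mulVec_Phihat (hM : 2 ≤ M) (ξ : ℝ) :
    ((1 - blochShift M ξ) * (1 - blochShift M ξ)) *ᵥ Phihat M ξ = fun i : Fin M =>
      if (i : ℕ) + 2 = M then (((2 * Real.cos ξ - 2) / cnorm M : ℝ) : ℂ) else 0 := by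
  ext i
  have hz := star_exp_mul_I_mul_self ξ
  have hcos : 2 * Complex.cos ξ = Complex.exp (ξ * I) + star (Complex.exp (ξ * I)) := by
    rw [star_exp_mul_I, Complex.two_cos]
  rw [← mulVec_mulVec, one_sub_blochShift_mulVec_Phihat]
  push_cast
  simp only [sub_mulVec, one_mulVec, Pi.sub_apply, blochShift, twistedShift_mulVec, val_finRotate,
    hcos]
  generalize Complex.exp (ξ * I) = z at hz ⊢
  have := i.isLt
  split_ifs <;> first
    | omega
    | ring1
    | linear_combination -(cnorm M : ℂ)⁻¹ * hz

lemma normSq_one_sub_exp_mul_I (ξ : ℝ) :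
    normSq (1 - Complex.exp (ξ * I)) = 2 - 2 * Real.cos ξ := by
  have hunit : normSq (Complex.exp (ξ * I)) = 1 := by
    rw [normSq_eq_norm_sq, norm_exp_ofReal_mul_I, one_pow]
  rw [normSq_sub, hunit, normSq_one, one_mul, conj_re, exp_ofReal_mul_I_re]
  ring

lemma star_dotProduct_one_sub_blochShift_Phihat (ξ : ℝ) :
    star ((1 - blochShift M ξ) *ᵥ Phihat M ξ) ⬝ᵥ ((1 - blochShift M ξ) *ᵥ Phihat M ξ) =
      ((M * (2 - 2 * Real.cos ξ) / cnorm M ^ 2 : ℝ) : ℂ) := by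
  have entry (i : Fin M) :
      star (((1 - blochShift M ξ) *ᵥ Phihat M ξ) i) * ((1 - blochShift M ξ) *ᵥ Phihat M ξ) i =
        (((2 - 2 * Real.cos ξ) / cnorm M ^ 2 : ℝ) : ℂ) := by
    rw [one_sub_blochShift_mulVec_Phihat, star_def, ← normSq_eq_conj_mul_self, normSq_div,
      normSq_ofReal, ← sq, ← normSq_one_sub_exp_mul_I]
    split_ifs
    · rfl
    · rw [← normSq_conj, ← normSq_neg]
      simp
  simp only [dotProduct, Pi.star_apply, entry, Finset.sum_const, Finset.card_fin, nsmul_eq_mul]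
  push_cast
  ring

lemma star_dotProduct_one_sub_blochShift_sq_Phihat (hM : 2 ≤ M) (ξ : ℝ) :
    star (((1 - blochShift M ξ) * (1 - blochShift M ξ)) *ᵥ Phihat M ξ) ⬝ᵥ
        (((1 - blochShift M ξ) * (1 - blochShift M ξ)) *ᵥ Phihat M ξ) =
      (((2 - 2 * Real.cos ξ) ^ 2 / cnorm M ^ 2 : ℝ) : ℂ) := by
  have hsupp (i : Fin M) : (i : ℕ) + 2 = M ↔ i = ⟨M - 2, by omega⟩ := by
    rw [Fin.ext_iff]; dsimp only; omega
  simp only [one_sub_blochShift_sq_mulVec_Phihat hM, hsupp, dotProduct, Pi.star_apply,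
    apply_ite star, star_zero, mul_ite, mul_zero, Finset.sum_ite_eq', Finset.mem_univ, if_true,
    star_def, conj_ofReal]
  push_cast
  ring

lemma star_dotProduct_Ahat_mulVec_Phihat (hM : 2 ≤ M) (κ1 κ2 ξ : ℝ) :
    star (Phihat M ξ) ⬝ᵥ Ahat M κ1 κ2 ξ *ᵥ Phihat M ξ =
      (((M * (κ1 + 4 * κ2) * (2 - 2 * Real.cos ξ) - κ2 * (2 - 2 * Real.cos ξ) ^ 2) /
        cnorm M ^ 2 : ℝ) : ℂ) := by
  rw [Ahat_eq_gram hM, smul_gram_add_smul_gram (star_blochShift_mul_self M ξ), sub_mulVec,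
    dotProduct_sub, smul_mulVec, smul_mulVec, dotProduct_smul, dotProduct_smul,
    star_dotProduct_star_mul_self_mulVec, star_dotProduct_star_mul_self_mulVec,
    star_dotProduct_one_sub_blochShift_Phihat, star_dotProduct_one_sub_blochShift_sq_Phihat hM,
    real_smul, real_smul]
  push_cast
  ring

lemma cnorm_sq (M : ℕ) : cnorm M ^ 2 = M * (2 * (M : ℝ) ^ 2 + 1) / 3 := by
  rw [cnorm, Real.sq_sqrt (by positivity)]
  ring

lemma integral_two_sub_two_mul_cos : ∫ ξ in 0..2 * π, (2 - 2 * Real.cos ξ) = 4 * π := by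
  rw [intervalIntegral.integral_sub (by simp) (Continuous.intervalIntegrable (by fun_prop) _ _),
    intervalIntegral.integral_const, intervalIntegral.integral_const_mul, integral_cos,
    Real.sin_two_pi, Real.sin_zero, smul_eq_mul]
  ring

lemma integral_two_sub_two_mul_cos_sq : ∫ ξ in 0..2 * π, (2 - 2 * Real.cos ξ) ^ 2 = 12 * π := by
  have expand (ξ : ℝ) :
      (2 - 2 * Real.cos ξ) ^ 2 = 4 * (2 - 2 * Real.cos ξ) + (4 * Real.cos ξ ^ 2 - 4) := by ring
  simp only [expand]
  rw [intervalIntegral.integral_add (Continuous.intervalIntegrable (by fun_prop) _ _)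
      (Continuous.intervalIntegrable (by fun_prop) _ _),
    intervalIntegral.integral_sub (Continuous.intervalIntegrable (by fun_prop) _ _) (by simp),
    intervalIntegral.integral_const_mul, intervalIntegral.integral_const_mul,
    integral_two_sub_two_mul_cos, integral_cos_sq, intervalIntegral.integral_const,
    Real.sin_two_pi, Real.sin_zero, smul_eq_mul]
  ring

lemma integral_star_dotProduct_Ahat_mulVec_Phihat (hM : 2 ≤ M) (κ1 κ2 : ℝ) :
    ∫ ξ in 0..2 * π, star (Phihat M ξ) ⬝ᵥ Ahat M κ1 κ2 ξ *ᵥ Phihat M ξ =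
      ((2 * π * ((2 * M * κ1 + 8 * M * κ2 - 6 * κ2) / (M * (2 * (M : ℝ) ^ 2 + 1) / 3)) : ℝ) :
        ℂ) := by
  simp only [star_dotProduct_Ahat_mulVec_Phihat hM, cnorm_sq]
  rw [intervalIntegral.integral_ofReal, intervalIntegral.integral_div,
    intervalIntegral.integral_sub (Continuous.intervalIntegrable (by fun_prop) _ _)
      (Continuous.intervalIntegrable (by fun_prop) _ _),
    intervalIntegral.integral_const_mul, intervalIntegral.integral_const_mul,
    integral_two_sub_two_mul_cos, integral_two_sub_two_mul_cos_sq]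
  congr 1
  ring

lemma integral_kernelDensity_nonneg (hM : 2 ≤ M) {κ1 κ2 : ℝ} (h1 : 0 ≤ κ1)
    (h2 : 0 ≤ κ1 + 4 * κ2) :
    0 ≤ ∫ ξ in 0..2 * π, kernelDensity (Ahat M κ1 κ2 ξ) (Phihat M ξ) := by
  rw [intervalIntegral.integral_of_le two_pi_pos.le]
  exact MeasureTheory.integral_nonneg fun ξ => kernelDensity_nonneg (posSemidef_Ahat hM h1 h2 ξ) _

lemma integral_kernelDensity_le (hM : 2 ≤ M) {κ1 κ2 : ℝ} (h1 : 0 ≤ κ1)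
    (h2 : 0 ≤ κ1 + 4 * κ2) :
    ∫ ξ in 0..2 * π, kernelDensity (Ahat M κ1 κ2 ξ) (Phihat M ξ) ≤
      ∫ ξ in 0..2 * π, star (Phihat M ξ) ⬝ᵥ Ahat M κ1 κ2 ξ *ᵥ Phihat M ξ := by
  have hcont : Continuous fun ξ => star (Phihat M ξ) ⬝ᵥ Ahat M κ1 κ2 ξ *ᵥ Phihat M ξ := by
    simp only [star_dotProduct_Ahat_mulVec_Phihat hM]
    fun_prop
  rw [intervalIntegral.integral_of_le two_pi_pos.le, intervalIntegral.integral_of_le two_pi_pos.le]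
  refine MeasureTheory.integral_mono_of_nonneg
    (.of_forall fun ξ => kernelDensity_nonneg (posSemidef_Ahat hM h1 h2 ξ) _)
    hcont.integrableOn_Ioc
    (.of_forall fun ξ => kernelDensity_le (posSemidef_Ahat hM h1 h2 ξ) _)

end Model

lemma isBigO_linear_div_cubic (a b : ℝ) :
    (fun M : ℕ => (a * M + b) / (M * (2 * (M : ℝ) ^ 2 + 1) / 3)) =O[Filter.atTop]
      fun M : ℕ => ((M : ℝ) ^ 2)⁻¹ := by
  refine .of_bound (3 / 2 * (|a| + |b|)) ?_
  filter_upwards [Filter.eventually_ge_atTop 1] with M hM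
  have hM' : (1 : ℝ) ≤ M := mod_cast hM
  have hnum : |a * M + b| ≤ (|a| + |b|) * M := by
    calc |a * M + b| ≤ |a| * M + |b| * 1 := by
          simpa [abs_mul] using abs_add_le (a * M) b
      _ ≤ |a| * M + |b| * M := by gcongr
      _ = (|a| + |b|) * M := by ring
  have hden : 2 / 3 * (M : ℝ) ^ 3 ≤ M * (2 * (M : ℝ) ^ 2 + 1) / 3 := by linarith
  calc ‖(a * M + b) / (M * (2 * (M : ℝ) ^ 2 + 1) / 3)‖
      = |a * M + b| / (M * (2 * (M : ℝ) ^ 2 + 1) / 3) := by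
        rw [norm_div, Real.norm_eq_abs, Real.norm_of_nonneg (by positivity)]
    _ ≤ (|a| + |b|) * M / (2 / 3 * (M : ℝ) ^ 3) := by gcongr
    _ = 3 / 2 * (|a| + |b|) * ‖((M : ℝ) ^ 2)⁻¹‖ := by
        rw [Real.norm_of_nonneg (by positivity)]; field_simp

theorem kernel_diagonal_bound_piecewise_linear_general (κ1 κ2 : ℝ)
    (h1 : 0 ≤ κ1) (h2 : 0 < κ1 + 4 * κ2)
    (Θ : ℕ → ℂ)
    (hΘ : ∀ M, Θ M = (1 / (2 * Real.pi) : ℂ) * ∫ ξ in (0 : ℝ)..(2 * Real.pi),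
        (star (Phihat M ξ) ⬝ᵥ (Ahat M κ1 κ2 ξ *ᵥ Phihat M ξ) -
          (star (Phihat M ξ) ⬝ᵥ ((Ahat M κ1 κ2 ξ)⁻¹ *ᵥ Phihat M ξ))⁻¹ *
            (star (Phihat M ξ) ⬝ᵥ Phihat M ξ) ^ 2)) :
    (∀ M : ℕ, 2 ≤ M → (Θ M).im = 0 ∧ 0 ≤ (Θ M).re ∧
        (Θ M).re ≤ (2 * M * κ1 + 8 * M * κ2 - 6 * κ2) / (M * (2 * (M : ℝ) ^ 2 + 1) / 3)) ∧
      (fun M : ℕ => (Θ M).re) =O[Filter.atTop] fun M : ℕ => ((M : ℝ) ^ 2)⁻¹ := by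
  have bounds (M : ℕ) (hM : 2 ≤ M) : (Θ M).im = 0 ∧ 0 ≤ (Θ M).re ∧
      (Θ M).re ≤ (2 * M * κ1 + 8 * M * κ2 - 6 * κ2) / (M * (2 * (M : ℝ) ^ 2 + 1) / 3) := by
    have hnonneg := integral_kernelDensity_nonneg hM h1 h2.le
    have hle := integral_kernelDensity_le hM h1 h2.le
    obtain ⟨r, hr, hint⟩ : ∃ r : ℝ, 0 ≤ r ∧ (r : ℂ) = _ :=
      RCLike.nonneg_iff_exists_ofReal.1 hnonneg
    rw [integral_star_dotProduct_Ahat_mulVec_Phihat hM, ← hint] at hle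
    have hΘM : Θ M = ((r / (2 * π) : ℝ) : ℂ) := by
      calc Θ M = 1 / (2 * π) * ∫ ξ in 0..2 * π, kernelDensity (Ahat M κ1 κ2 ξ) (Phihat M ξ) := hΘ M
        _ = ((r / (2 * π) : ℝ) : ℂ) := by rw [← hint]; push_cast; ring
    rw [hΘM, ofReal_im, ofReal_re]
    exact ⟨rfl, div_nonneg hr two_pi_pos.le, (div_le_iff₀' two_pi_pos).2 (mod_cast hle)⟩
  refine ⟨bounds, .trans (.of_bound' ?_) (isBigO_linear_div_cubic (2 * κ1 + 8 * κ2) (-6 * κ2))⟩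
  filter_upwards [Filter.eventually_ge_atTop 2] with M hM
  obtain ⟨-, hnonneg, hle⟩ := bounds M hM
  rw [Real.norm_of_nonneg hnonneg]
  exact hle.trans (le_of_eq_of_le (by ring) (le_abs_self _))

theorem kernel_diagonal_bound_piecewise_linear (κ1 κ2 : ℝ)
    (h1 : 0 < κ1) (h2 : 0 < κ1 + 4 * κ2)
    (Θ : ℕ → ℂ)
    (hΘ : ∀ M, Θ M = (1 / (2 * Real.pi) : ℂ) * ∫ ξ in (0 : ℝ)..(2 * Real.pi),
        (star (Phihat M ξ) ⬝ᵥ (Ahat M κ1 κ2 ξ *ᵥ Phihat M ξ) -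
          (star (Phihat M ξ) ⬝ᵥ ((Ahat M κ1 κ2 ξ)⁻¹ *ᵥ Phihat M ξ))⁻¹ *
            (star (Phihat M ξ) ⬝ᵥ Phihat M ξ) ^ 2)) :
    (∀ M : ℕ, 5 ≤ M → (Θ M).im = 0 ∧ 0 ≤ (Θ M).re ∧
        (Θ M).re ≤ (2 * M * κ1 + 8 * M * κ2 - 6 * κ2) / (M * (2 * (M : ℝ) ^ 2 + 1) / 3)) ∧
      (fun M : ℕ => (Θ M).re) =O[Filter.atTop] fun M : ℕ => ((M : ℝ) ^ 2)⁻¹ := by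
  obtain ⟨bounds, hO⟩ := kernel_diagonal_bound_piecewise_linear_general κ1 κ2 h1.le h2 Θ hΘ
  exact ⟨fun M hM => bounds M (by omega), hO⟩
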